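/- Let p > 1 and δ ≥ 0. For every ε > 0 there exists c_ε ≥ 1 depending only on ε, p, and δ such that for all t ≥ 0 and all a, b ∈ ℝ^d: φ_{|a|}(t) ≤ c_ε·φ_{|b|}(t) + ε·|F(a) − F(b)|², where φ_c(t) = ∫₀ᵗ φ'(c+s)(s/(c+s)) ds with φ'(t) = (δ+t)^{p-2} t, and F(a) = (δ+|a|)^{(p-2)/2} a. -/

import Mathlib

/-- The shifted N-function `φ_c(t) = ∫₀ᵗ φ'(c+s) · s/(c+s) ds`, where
`φ'(r) = (δ+r)^(p-2) r`. -/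
noncomputable def shiftPhi (p δ c t : ℝ) : ℝ :=
  ∫ s in (0:ℝ)..t, ((δ + (c + s)) ^ (p - 2) * (c + s)) * (s / (c + s))

/-!
Substituting `s = t u` turns `φ_c(t)` into `t² ∫₀¹ (A + t u)^(p-2) u du` with `A = δ + c`, and
`u (A + t) ≤ A + t u ≤ A + t` shows that it is comparable to `(A + t)^(p-2) t²`, with constants
depending only on `p`. Write `A = δ + |a|`, `B = δ + |b|` and fix a large `M`. If neither of `A`,
`B` exceeds `M` times both the other one and `t`, then `A + t` and `B + t` are comparable, hence so
are `φ_{|a|}(t)` and `φ_{|b|}(t)`. Otherwise `m = max A B` is at least `M` times the smaller one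
and at least `M t`. Then `|F(a) - F(b)|²` is at least `m^p / 4`, whereas `φ_{|a|}(t)` is at most a
constant times `M^(-min p 2) m^p`, which is absorbed by choosing `M` large.
-/

universe u

open MeasureTheory Filter

section RealPowers

variable {x y k α β : ℝ}

theorem rpow_le_rpow_mul_rpow_of_mul_le (hy : 0 < y) (hk : 0 < k) (hkx : k * y ≤ x) (hxy : x ≤ y)
    (hβ : β ≤ 0) (hβα : β ≤ α) : x ^ α ≤ k ^ β * y ^ α := by
  have hx : 0 < x := (mul_pos hk hy).trans_le hkx
  have hratio : (x / y) ^ α ≤ k ^ β :=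
    calc (x / y) ^ α ≤ (x / y) ^ β :=
          Real.rpow_le_rpow_of_exponent_ge (div_pos hx hy) ((div_le_one hy).2 hxy) hβα
      _ ≤ k ^ β := Real.rpow_le_rpow_of_nonpos hk ((le_div_iff₀ hy).2 hkx) hβ
  rwa [Real.div_rpow hx.le hy.le, div_le_iff₀ (Real.rpow_pos_of_pos hy α)] at hratio

theorem rpow_mul_rpow_le_rpow_of_mul_le (hy : 0 < y) (hk : 0 < k) (hkx : k * y ≤ x) (hxy : x ≤ y)
    (hβ : 0 ≤ β) (hαβ : α ≤ β) : k ^ β * y ^ α ≤ x ^ α := by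
  have hx : 0 < x := (mul_pos hk hy).trans_le hkx
  have hratio : k ^ β ≤ (x / y) ^ α :=
    calc k ^ β ≤ (x / y) ^ β := Real.rpow_le_rpow hk.le ((le_div_iff₀ hy).2 hkx) hβ
      _ ≤ (x / y) ^ α :=
          Real.rpow_le_rpow_of_exponent_ge (div_pos hx hy) ((div_le_one hy).2 hxy) hαβ
  rwa [Real.div_rpow hx.le hy.le, le_div_iff₀ (Real.rpow_pos_of_pos hy α)] at hratio

theorem rpow_sub_two_div_two_mul_self {p : ℝ} (hp : p ≠ 0) (hx : 0 ≤ x) :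
    x ^ ((p - 2) / 2) * x = x ^ (p / 2) := by
  have hexp : (p - 2) / 2 + 1 = p / 2 := by ring
  rw [← Real.rpow_add_one' hx (by rw [hexp]; positivity), hexp]

theorem rpow_le_rpow_abs_mul_rpow (hx : 0 < x) (hy : 0 < y) (hxy : x ≤ k * y) (hyx : y ≤ k * x) :
    x ^ α ≤ k ^ |α| * y ^ α := by
  have hk : 0 < k := (mul_pos_iff_of_pos_right hy).1 (hx.trans_le hxy)
  rcases le_total 0 α with hα | hα
  · rw [abs_of_nonneg hα, ← Real.mul_rpow hk.le hy.le]
    exact Real.rpow_le_rpow hx.le hxy hα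
  · have hdiv : y / k ≤ x := (div_le_iff₀' hk).2 hyx
    calc x ^ α ≤ (y / k) ^ α := Real.rpow_le_rpow_of_nonpos (div_pos hy hk) hdiv hα
      _ = k ^ |α| * y ^ α := by
        rw [Real.div_rpow hy.le hk.le, abs_of_nonpos hα, Real.rpow_neg hk.le, div_eq_inv_mul]

end RealPowers

section Integrals

variable {p q r A t : ℝ}

theorem intervalIntegrable_const_mul_rpow_sub_one (hq : 0 < q) (K : ℝ) :
    IntervalIntegrable (fun u : ℝ ↦ K * u ^ (q - 1)) volume 0 1 :=
  (intervalIntegral.intervalIntegrable_rpow' (by linarith)).const_mul K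

theorem integral_const_mul_rpow_sub_one (hq : 0 < q) (K : ℝ) :
    ∫ u in (0:ℝ)..1, K * u ^ (q - 1) = K / q := by
  rw [intervalIntegral.integral_const_mul, integral_rpow (Or.inl (by linarith)), sub_add_cancel,
    Real.one_rpow, Real.zero_rpow hq.ne', sub_zero, mul_one_div]

theorem add_mul_rpow_mul_le (hq : q ≤ 2) (hqp : q ≤ p) (hA : 0 ≤ A) (ht : 0 < t) {u : ℝ}
    (hu : 0 < u) (hu1 : u ≤ 1) :
    (A + t * u) ^ (p - 2) * u ≤ (A + t) ^ (p - 2) * u ^ (q - 1) := by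
  have hpow : (A + t * u) ^ (p - 2) ≤ u ^ (q - 2) * (A + t) ^ (p - 2) :=
    rpow_le_rpow_mul_rpow_of_mul_le (by positivity) hu (by nlinarith) (by nlinarith)
      (by linarith) (by linarith)
  have hu_pow : u ^ (q - 1) = u ^ (q - 2) * u := by
    rw [← Real.rpow_add_one hu.ne']; ring_nf
  calc (A + t * u) ^ (p - 2) * u ≤ u ^ (q - 2) * (A + t) ^ (p - 2) * u := by gcongr
    _ = (A + t) ^ (p - 2) * u ^ (q - 1) := by rw [hu_pow]; ring

theorem le_add_mul_rpow_mul (hr : 2 ≤ r) (hpr : p ≤ r) (hA : 0 ≤ A) (ht : 0 < t) {u : ℝ}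
    (hu : 0 < u) (hu1 : u ≤ 1) :
    (A + t) ^ (p - 2) * u ^ (r - 1) ≤ (A + t * u) ^ (p - 2) * u := by
  have hpow : u ^ (r - 2) * (A + t) ^ (p - 2) ≤ (A + t * u) ^ (p - 2) :=
    rpow_mul_rpow_le_rpow_of_mul_le (by positivity) hu (by nlinarith) (by nlinarith)
      (by linarith) (by linarith)
  have hu_pow : u ^ (r - 1) = u ^ (r - 2) * u := by
    rw [← Real.rpow_add_one hu.ne']; ring_nf
  calc (A + t) ^ (p - 2) * u ^ (r - 1) = u ^ (r - 2) * (A + t) ^ (p - 2) * u := by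
        rw [hu_pow]; ring
    _ ≤ (A + t * u) ^ (p - 2) * u := by gcongr

theorem intervalIntegrable_add_mul_rpow_mul (hp : 0 < p) (hA : 0 ≤ A) (ht : 0 < t) :
    IntervalIntegrable (fun u : ℝ ↦ (A + t * u) ^ (p - 2) * u) volume 0 1 := by
  refine (intervalIntegrable_const_mul_rpow_sub_one (q := min p 2) (by positivity)
    ((A + t) ^ (p - 2))).mono_fun' (by fun_prop) ?_
  filter_upwards [ae_restrict_mem measurableSet_uIoc] with u hu
  obtain ⟨hu0, hu1⟩ : 0 < u ∧ u ≤ 1 := by rwa [Set.uIoc_of_le zero_le_one] at hu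
  rw [Real.norm_of_nonneg (by positivity)]
  exact add_mul_rpow_mul_le (min_le_right _ _) (min_le_left _ _) hA ht hu0 hu1

theorem integral_add_mul_rpow_mul_le (hq0 : 0 < q) (hq : q ≤ 2) (hqp : q ≤ p) (hA : 0 ≤ A)
    (ht : 0 < t) :
    ∫ u in (0:ℝ)..1, (A + t * u) ^ (p - 2) * u ≤ (A + t) ^ (p - 2) / q := by
  rw [← integral_const_mul_rpow_sub_one hq0]
  exact intervalIntegral.integral_mono_on_of_le_Ioo zero_le_one
    (intervalIntegrable_add_mul_rpow_mul (hq0.trans_le hqp) hA ht)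
    (intervalIntegrable_const_mul_rpow_sub_one hq0 _)
    fun u hu ↦ add_mul_rpow_mul_le hq hqp hA ht hu.1 hu.2.le

theorem le_integral_add_mul_rpow_mul (hp : 0 < p) (hr : 2 ≤ r) (hpr : p ≤ r) (hA : 0 ≤ A)
    (ht : 0 < t) :
    (A + t) ^ (p - 2) / r ≤ ∫ u in (0:ℝ)..1, (A + t * u) ^ (p - 2) * u := by
  have hr0 : 0 < r := by linarith
  rw [← integral_const_mul_rpow_sub_one hr0]
  exact intervalIntegral.integral_mono_on_of_le_Ioo zero_le_one
    (intervalIntegrable_const_mul_rpow_sub_one hr0 _)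
    (intervalIntegrable_add_mul_rpow_mul hp hA ht)
    fun u hu ↦ le_add_mul_rpow_mul hr hpr hA ht hu.1 hu.2.le

end Integrals

section ShiftPhi

variable {p q r δ c c' t M m : ℝ}

theorem shiftPhi_zero_right (p δ c : ℝ) : shiftPhi p δ c 0 = 0 :=
  intervalIntegral.integral_same

theorem shiftPhi_eq_sq_mul_integral (p δ : ℝ) (hc : 0 ≤ c) (ht : 0 ≤ t) :
    shiftPhi p δ c t = t ^ 2 * ∫ u in (0:ℝ)..1, (δ + c + t * u) ^ (p - 2) * u := by
  have hcancel : shiftPhi p δ c t = ∫ s in (0:ℝ)..t, (δ + c + s) ^ (p - 2) * s := by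
    refine intervalIntegral.integral_congr_Ioo_of_le ht fun s ⟨hs, _⟩ ↦ ?_
    have hcs : c + s ≠ 0 := by positivity
    simp only [mul_assoc, mul_div_cancel₀ s hcs, add_assoc]
  have hscale := intervalIntegral.mul_integral_comp_mul_left
    (f := fun s ↦ (δ + c + s) ^ (p - 2) * s) (a := 0) (b := 1) t
  rw [mul_zero, mul_one] at hscale
  have hfactor (u : ℝ) : (δ + c + t * u) ^ (p - 2) * (t * u)
      = t * ((δ + c + t * u) ^ (p - 2) * u) := mul_left_comm _ _ _
  simp only [hcancel, ← hscale, hfactor, intervalIntegral.integral_const_mul, sq, mul_assoc]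

theorem shiftPhi_nonneg (p : ℝ) (hδ : 0 ≤ δ) (hc : 0 ≤ c) (ht : 0 ≤ t) :
    0 ≤ shiftPhi p δ c t := by
  refine intervalIntegral.integral_nonneg ht fun s ⟨hs, _⟩ ↦ ?_
  positivity

theorem shiftPhi_le (hq0 : 0 < q) (hq : q ≤ 2) (hqp : q ≤ p) (hδ : 0 ≤ δ) (hc : 0 ≤ c)
    (ht : 0 < t) : shiftPhi p δ c t ≤ (δ + c + t) ^ (p - 2) * t ^ 2 / q := by
  rw [shiftPhi_eq_sq_mul_integral p δ hc ht.le, mul_comm _ (t ^ 2), mul_div_assoc]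
  gcongr
  exact integral_add_mul_rpow_mul_le hq0 hq hqp (by positivity) ht

theorem le_shiftPhi (hp : 0 < p) (hr : 2 ≤ r) (hpr : p ≤ r) (hδ : 0 ≤ δ) (hc : 0 ≤ c)
    (ht : 0 < t) : (δ + c + t) ^ (p - 2) * t ^ 2 / r ≤ shiftPhi p δ c t := by
  rw [shiftPhi_eq_sq_mul_integral p δ hc ht.le, mul_comm _ (t ^ 2), mul_div_assoc]
  gcongr
  exact le_integral_add_mul_rpow_mul hp hr hpr (by positivity) ht

theorem shiftPhi_le_mul_shiftPhi (hp : 0 < p) (hδ : 0 ≤ δ) (hc : 0 ≤ c) (hc' : 0 ≤ c')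
    (ht : 0 < t) (hle : δ + c + t ≤ M * (δ + c' + t))
    (hge : δ + c' + t ≤ M * (δ + c + t)) :
    shiftPhi p δ c t ≤ max p 2 / min p 2 * M ^ |p - 2| * shiftPhi p δ c' t := by
  have hM : 0 < M := pos_of_mul_pos_left (lt_of_lt_of_le (by positivity) hle) (by positivity)
  have hmin : 0 < min p 2 := by positivity
  calc shiftPhi p δ c t ≤ (δ + c + t) ^ (p - 2) * t ^ 2 / min p 2 :=
        shiftPhi_le hmin (min_le_right _ _) (min_le_left _ _) hδ hc ht
    _ ≤ M ^ |p - 2| * (δ + c' + t) ^ (p - 2) * t ^ 2 / min p 2 := by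
        gcongr
        exact rpow_le_rpow_abs_mul_rpow (by positivity) (by positivity) hle hge
    _ = max p 2 / min p 2 * M ^ |p - 2| * ((δ + c' + t) ^ (p - 2) * t ^ 2 / max p 2) := by
        field_simp
    _ ≤ max p 2 / min p 2 * M ^ |p - 2| * shiftPhi p δ c' t := by
        gcongr
        exact le_shiftPhi hp (le_max_right _ _) (le_max_left _ _) hδ hc' ht

theorem shiftPhi_le_mul_rpow (hq0 : 0 < q) (hq : q ≤ 2) (hqp : q ≤ p) (hδ : 0 ≤ δ) (hc : 0 ≤ c)
    (ht : 0 < t) (hM : 1 ≤ M) (hcm : δ + c ≤ m) (htm : M * t ≤ m) :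
    shiftPhi p δ c t ≤ 2 ^ (p - q) / (q * M ^ q) * m ^ p := by
  have hM0 : 0 < M := by linarith
  have hm : 0 < m := (mul_pos hM0 ht).trans_le htm
  have hsum : δ + c + t ≤ 2 * m := by nlinarith
  have htm' : t ≤ m / M := (le_div_iff₀' hM0).2 htm
  have hpow : (δ + c + t) ^ (p - 2) * t ^ 2 ≤ (δ + c + t) ^ (p - q) * t ^ q := by
    have hsplit : t ^ 2 = t ^ (2 - q) * t ^ q := by
      rw [← Real.rpow_add ht, sub_add_cancel, Real.rpow_two]
    calc (δ + c + t) ^ (p - 2) * t ^ 2 = (δ + c + t) ^ (p - 2) * t ^ (2 - q) * t ^ q := by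
          rw [hsplit, mul_assoc]
      _ ≤ (δ + c + t) ^ (p - 2) * (δ + c + t) ^ (2 - q) * t ^ q := by
          gcongr
          linarith
      _ = (δ + c + t) ^ (p - q) * t ^ q := by
          rw [← Real.rpow_add (by positivity)]; ring_nf
  calc shiftPhi p δ c t ≤ (δ + c + t) ^ (p - 2) * t ^ 2 / q := shiftPhi_le hq0 hq hqp hδ hc ht
    _ ≤ (δ + c + t) ^ (p - q) * t ^ q / q := by gcongr
    _ ≤ (2 * m) ^ (p - q) * (m / M) ^ q / q := by
        gcongr
    _ = 2 ^ (p - q) / (q * M ^ q) * m ^ p := by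
        rw [Real.mul_rpow zero_le_two hm.le, Real.div_rpow hm.le hM0.le, Real.rpow_sub hm]
        field_simp

end ShiftPhi

section NaturalMap

variable {E : Type*} [SeminormedAddCommGroup E] [NormedSpace ℝ E] {p δ M : ℝ}

/-- The map `F(a) = (δ + |a|)^((p-2)/2) a` on a seminormed space; `|F(a) - F(b)|` is the
natural distance attached to `φ`. -/
noncomputable def naturalMap (p δ : ℝ) (a : E) : E := (δ + ‖a‖) ^ ((p - 2) / 2) • a

theorem norm_naturalMap (p : ℝ) (hδ : 0 ≤ δ) (a : E) :
    ‖naturalMap p δ a‖ = (δ + ‖a‖) ^ ((p - 2) / 2) * ‖a‖ := by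
  rw [naturalMap, norm_smul, Real.norm_of_nonneg (by positivity)]

theorem norm_naturalMap_le (hp : 0 < p) (hδ : 0 ≤ δ) (a : E) :
    ‖naturalMap p δ a‖ ≤ (δ + ‖a‖) ^ (p / 2) := by
  rw [norm_naturalMap p hδ,
    ← rpow_sub_two_div_two_mul_self hp.ne' (add_nonneg hδ (norm_nonneg a))]
  gcongr
  linarith

theorem mul_rpow_le_norm_naturalMap (hp : 0 < p) (hδ : 0 ≤ δ) {a : E} {k : ℝ}
    (hk : k * (δ + ‖a‖) ≤ ‖a‖) : k * (δ + ‖a‖) ^ (p / 2) ≤ ‖naturalMap p δ a‖ := by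
  rw [norm_naturalMap p hδ,
    ← rpow_sub_two_div_two_mul_self hp.ne' (add_nonneg hδ (norm_nonneg a)), mul_left_comm]
  gcongr

theorem add_norm_rpow_le_norm_naturalMap_sub_sq (hp : 0 < p) (hδ : 0 ≤ δ) (hM : 4 ≤ M)
    (hMp : 4 ≤ M ^ (p / 2)) {a b : E} (hab : M * (δ + ‖b‖) ≤ δ + ‖a‖) :
    (δ + ‖a‖) ^ p ≤ 4 * ‖naturalMap p δ a - naturalMap p δ b‖ ^ 2 := by
  have ha_lower : 3 / 4 * (δ + ‖a‖) ^ (p / 2) ≤ ‖naturalMap p δ a‖ :=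
    mul_rpow_le_norm_naturalMap hp hδ (by nlinarith [norm_nonneg b])
  have hb_upper : 4 * ‖naturalMap p δ b‖ ≤ (δ + ‖a‖) ^ (p / 2) :=
    calc 4 * ‖naturalMap p δ b‖ ≤ M ^ (p / 2) * (δ + ‖b‖) ^ (p / 2) := by
          gcongr
          exact norm_naturalMap_le hp hδ b
      _ = (M * (δ + ‖b‖)) ^ (p / 2) := (Real.mul_rpow (by linarith) (by positivity)).symm
      _ ≤ (δ + ‖a‖) ^ (p / 2) := by gcongr
  have hgap : (δ + ‖a‖) ^ (p / 2) ≤ 2 * ‖naturalMap p δ a - naturalMap p δ b‖ := by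
    linarith [norm_sub_norm_le (naturalMap p δ a) (naturalMap p δ b)]
  calc (δ + ‖a‖) ^ p = ((δ + ‖a‖) ^ (p / 2)) ^ 2 := by
        rw [← Real.rpow_mul_natCast (by positivity), Nat.cast_ofNat, div_mul_cancel₀ p two_ne_zero]
    _ ≤ (2 * ‖naturalMap p δ a - naturalMap p δ b‖) ^ 2 := by gcongr
    _ = 4 * ‖naturalMap p δ a - naturalMap p δ b‖ ^ 2 := by ring

end NaturalMap

theorem comparable_or_separated {A B t M : ℝ} (hA : 0 ≤ A) (hB : 0 ≤ B) (ht : 0 ≤ t)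
    (hM : 0 ≤ M) :
    (A + t ≤ (M + 1) * (B + t) ∧ B + t ≤ (M + 1) * (A + t)) ∨
      (M * B ≤ A ∧ M * t ≤ A) ∨ (M * A ≤ B ∧ M * t ≤ B) := by
  have comparable_of_not {x y : ℝ} (hy : 0 ≤ y) (h : ¬(M * y ≤ x ∧ M * t ≤ x)) :
      x + t ≤ (M + 1) * (y + t) := by
    rcases not_and_or.1 h with h | h <;> nlinarith [mul_nonneg hM hy, mul_nonneg hM ht]
  by_cases hAB : M * B ≤ A ∧ M * t ≤ A
  · exact Or.inr (Or.inl hAB)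
  by_cases hBA : M * A ≤ B ∧ M * t ≤ B
  · exact Or.inr (Or.inr hBA)
  exact Or.inl ⟨comparable_of_not hB hAB, comparable_of_not hA hBA⟩

theorem exists_scale {p q : ℝ} (hp : 0 < p) (hq : 0 < q) {ε : ℝ} (hε : 0 < ε) :
    ∃ M : ℝ, 4 ≤ M ∧ 4 ≤ M ^ (p / 2) ∧ 2 ^ (p - q) / (q * M ^ q) ≤ ε / 4 := by
  obtain ⟨M, hM, hMp, hMq⟩ := ((eventually_ge_atTop (4 : ℝ)).and
    (((tendsto_rpow_atTop (half_pos hp)).eventually_ge_atTop 4).and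
      ((tendsto_rpow_atTop hq).eventually_ge_atTop (2 ^ (p - q) / (q * (ε / 4)))))).exists
  refine ⟨M, hM, hMp, ?_⟩
  rw [div_le_iff₀ (by positivity)] at hMq ⊢
  linarith

theorem stmt5_general {p ε : ℝ} (hp : 0 < p) (hε : 0 < ε) :
    ∃ c ≥ (1:ℝ), ∀ (E : Type u) [SeminormedAddCommGroup E] [NormedSpace ℝ E],
      ∀ δ ≥ (0:ℝ), ∀ t ≥ (0:ℝ), ∀ a b : E,
        shiftPhi p δ ‖a‖ t ≤ c * shiftPhi p δ ‖b‖ t +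
          ε * ‖naturalMap p δ a - naturalMap p δ b‖ ^ 2 := by
  have hq : 0 < min p 2 := by positivity
  obtain ⟨M, hM, hMp, hMq⟩ := exists_scale hp hq hε
  have hc : 1 ≤ max p 2 / min p 2 * (M + 1) ^ |p - 2| :=
    one_le_mul_of_one_le_of_one_le ((one_le_div hq).2 min_le_max)
      (Real.one_le_rpow (by linarith) (abs_nonneg _))
  refine ⟨_, hc, fun E _ _ δ hδ t ht a b ↦ ?_⟩
  rcases ht.eq_or_lt with rfl | ht0
  · simp only [shiftPhi_zero_right, mul_zero, zero_add]
    positivity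
  have hφb : 0 ≤ shiftPhi p δ ‖b‖ t := shiftPhi_nonneg p hδ (norm_nonneg b) ht
  have hφa {m : ℝ} (ham : δ + ‖a‖ ≤ m) (htm : M * t ≤ m) :
      shiftPhi p δ ‖a‖ t ≤ ε / 4 * m ^ p := by
    have hm : 0 ≤ m := by linarith [add_nonneg hδ (norm_nonneg a)]
    exact (shiftPhi_le_mul_rpow hq (min_le_right _ _) (min_le_left _ _) hδ (norm_nonneg a) ht0
      (by linarith) ham htm).trans (by gcongr)
  rcases comparable_or_separated (M := M) (add_nonneg hδ (norm_nonneg a))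
      (add_nonneg hδ (norm_nonneg b)) ht (by linarith) with ⟨hle, hge⟩ | ⟨hba, hta⟩ | ⟨hab, htb⟩
  · exact le_add_of_le_of_nonneg (shiftPhi_le_mul_shiftPhi hp hδ (norm_nonneg a) (norm_nonneg b)
      ht0 hle hge) (by positivity)
  · refine le_add_of_nonneg_of_le (by positivity) ((hφa le_rfl hta).trans ?_)
    nlinarith [add_norm_rpow_le_norm_naturalMap_sub_sq hp hδ hM hMp hba]
  · have hA : δ + ‖a‖ ≤ δ + ‖b‖ := by nlinarith [add_nonneg hδ (norm_nonneg a)]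
    refine le_add_of_nonneg_of_le (by positivity) ((hφa hA htb).trans ?_)
    rw [norm_sub_rev]
    nlinarith [add_norm_rpow_le_norm_naturalMap_sub_sq hp hδ hM hMp hab]

theorem stmt5 (d : ℕ) (p δ : ℝ) (hp : 1 < p) (hδ : 0 ≤ δ) :
    ∀ ε > (0:ℝ), ∃ c ≥ (1:ℝ), ∀ t ≥ (0:ℝ), ∀ a b : EuclideanSpace ℝ (Fin d),
      shiftPhi p δ ‖a‖ t ≤ c * shiftPhi p δ ‖b‖ t +
        ε * ‖(δ + ‖a‖) ^ ((p - 2) / 2) • a - (δ + ‖b‖) ^ ((p - 2) / 2) • b‖ ^ 2 := by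
  intro ε hε
  obtain ⟨c, hc, hshift⟩ := stmt5_general (zero_lt_one.trans hp) hε
  exact ⟨c, hc, hshift (EuclideanSpace ℝ (Fin d)) δ hδ⟩
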